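/- Let f be C²-smooth on an open neighbourhood of S^{n-1}. Then ∫ |∇_S f|² dσ_{n-1} ≤ ∫ ‖f''_S‖²_HS dσ_{n-1}. Moreover, if the restriction of f to S^{n-1} is orthogonal to all linear functions, then ∫ |∇_S f|² dσ_{n-1} ≤ (1/(n+2)) ∫ ‖f''_S‖²_HS dσ_{n-1}. -/

import Mathlib

open MeasureTheory Metric Filter
open scoped RealInnerProductSpace ENNReal NNReal

noncomputable section

namespace SecondOrderConc

/-- Euclidean space ℝⁿ. -/
abbrev E (n : ℕ) : Type := EuclideanSpace ℝ (Fin n)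

/-- The uniform (normalized rotation-invariant) probability measure `σ_{n-1}`
on the unit sphere `S^{n-1}`, viewed as a measure on the ambient space ℝⁿ. -/
def sphMeasure (n : ℕ) : Measure (E n) :=
  ((((volume : Measure (E n)).toSphere).map Subtype.val) Set.univ)⁻¹ •
    (((volume : Measure (E n)).toSphere).map Subtype.val)

variable {n : ℕ}

/-- Euclidean Hessian of `f` at `x`, as a continuous linear operator on ℝⁿ. -/
def hess (f : E n → ℝ) (x : E n) : E n →L[ℝ] E n :=
  fderiv ℝ (gradient f) x

/-- Squared Hilbert–Schmidt norm of an operator on ℝⁿ. -/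
def hsNormSq (A : E n →L[ℝ] E n) : ℝ :=
  ∑ i : Fin n, ‖A (EuclideanSpace.single i 1)‖ ^ 2

/-- Orthogonal projection of ℝⁿ onto `θ^⊥` (for a unit vector `θ`). -/
def projPerp (θ : E n) : E n →L[ℝ] E n :=
  ContinuousLinearMap.id ℝ (E n) - (innerSL ℝ θ).smulRight θ

/-- Spherical gradient `∇_S f(θ) = ∇f(θ) − ⟨∇f(θ),θ⟩θ`. -/
def sgrad (f : E n → ℝ) (θ : E n) : E n :=
  gradient f θ - ⟪gradient f θ, θ⟫ • θ

/-- Spherical Hessian `f''_S(θ) = P_{θ^⊥} (f''(θ) − ⟨∇f(θ),θ⟩ I_n) P_{θ^⊥}`. -/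
def sHess (f : E n → ℝ) (θ : E n) : E n →L[ℝ] E n :=
  (projPerp θ).comp
    ((hess f θ - ⟪gradient f θ, θ⟫ • ContinuousLinearMap.id ℝ (E n)).comp (projPerp θ))

/-- Spherical Laplacian `Δ_S f(θ) = Tr f''_S(θ)`. -/
def sLap (f : E n → ℝ) (θ : E n) : ℝ :=
  LinearMap.trace ℝ (E n) (sHess f θ).toLinearMap

/-- Euclidean Laplacian `Δ f = Tr f''`. -/
def eLap (f : E n → ℝ) (x : E n) : ℝ :=
  LinearMap.trace ℝ (E n) (hess f x).toLinearMap

/-- 0-homogeneous extension to `ℝⁿ \ {0}` of (the restriction to the sphere of) `g`. -/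
def ext0 (g : E n → ℝ) : E n → ℝ := fun x => g (‖x‖⁻¹ • x)

/-! ### Rotation invariance of the uniform measure on the sphere -/

open scoped Pointwise in
lemma map_coe_toSphere_eq (R : E n ≃ₗᵢ[ℝ] E n) :
    ((((volume : Measure (E n)).toSphere).map Subtype.val)).map R =
      ((volume : Measure (E n)).toSphere).map Subtype.val := by
  ext s hs
  have hR : Measurable R := R.continuous.measurable
  rw [Measure.map_apply hR hs, Measure.map_apply measurable_subtype_coe (hR hs),
    Measure.map_apply measurable_subtype_coe hs,
    Measure.toSphere_apply' _ (measurable_subtype_coe (hR hs)),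
    Measure.toSphere_apply' _ (measurable_subtype_coe hs)]
  congr 1
  have hset : Set.Ioo (0 : ℝ) 1 •
      ((↑) '' ((↑) ⁻¹' (R ⁻¹' s) : Set (sphere (0 : E n) 1)) : Set (E n)) = R ⁻¹' (Set.Ioo (0 : ℝ) 1 •
      ((↑) '' ((↑) ⁻¹' s : Set (sphere (0 : E n) 1)) : Set (E n))) := by
    ext x
    simp only [Set.mem_smul, Subtype.image_preimage_coe, Set.mem_inter_iff, Set.mem_preimage,
      mem_sphere_iff_norm, sub_zero]
    constructor
    · rintro ⟨r, hr, y, ⟨hy1, hy⟩, rfl⟩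
      exact ⟨r, hr, R y, ⟨by simpa using hy1, hy⟩, by simp⟩
    · rintro ⟨r, hr, y, ⟨hy1, hy⟩, hx⟩
      exact ⟨r, hr, R.symm y, ⟨by simpa using hy1, by simpa using hy⟩,
        R.injective (by simpa using hx)⟩
  rw [hset]
  exact (R.measurePreserving).measure_preimage_equiv (f := R.toMeasurableEquiv) _

lemma map_sphMeasure (R : E n ≃ₗᵢ[ℝ] E n) : (sphMeasure n).map R = sphMeasure n := by
  rw [sphMeasure, Measure.map_smul, map_coe_toSphere_eq]

lemma integral_comp_sphMeasure (R : E n ≃ₗᵢ[ℝ] E n) (g : E n → ℝ) :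
    ∫ x, g (R x) ∂sphMeasure n = ∫ x, g x ∂sphMeasure n := by
  conv_rhs => rw [← map_sphMeasure R]
  exact (R.toHomeomorph.measurableEmbedding.integral_map g).symm

instance isFiniteMeasure_sphMeasure : IsFiniteMeasure (sphMeasure n) := by
  constructor
  rw [sphMeasure, Measure.smul_apply, smul_eq_mul]
  exact (ENNReal.inv_mul_le_one _).trans_lt ENNReal.one_lt_top

lemma ae_mem_sphere : ∀ᵐ x ∂sphMeasure n, x ∈ sphere (0 : E n) 1 := by
  refine Measure.ae_smul_measure ?_ _
  exact (ae_map_iff (p := fun x => x ∈ sphere (0 : E n) 1) measurable_subtype_coe.aemeasurable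
    isClosed_sphere.measurableSet).2 (Eventually.of_forall fun x => x.2)

lemma memLp_sphMeasure {g : E n → ℝ} (hg : Continuous g) (p : ℝ≥0∞) :
    MemLp g p (sphMeasure n) := by
  obtain ⟨C, hC⟩ := (isCompact_sphere (0 : E n) 1).exists_bound_of_continuousOn hg.continuousOn
  exact MemLp.of_bound hg.aestronglyMeasurable C (ae_mem_sphere.mono fun x hx => hC x hx)

lemma integrable_sphMeasure {g : E n → ℝ} (hg : Continuous g) : Integrable g (sphMeasure n) :=
  memLp_one_iff_integrable.1 (memLp_sphMeasure hg 1)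

lemma integral_congr_sphere {g h : E n → ℝ} (H : ∀ x, ‖x‖ = 1 → g x = h x) :
    ∫ x, g x ∂sphMeasure n = ∫ x, h x ∂sphMeasure n :=
  integral_congr_ae (ae_mem_sphere.mono fun x hx => H x (by simpa using hx))

/-! ### Rotation fields -/

/-- The generator `x ↦ x_i e_j - x_j e_i` of the rotations in the `(i, j)` plane. -/
def rotGen (i j : Fin n) : E n →L[ℝ] E n :=
  (EuclideanSpace.proj i).smulRight (EuclideanSpace.single j (1 : ℝ)) -
    (EuclideanSpace.proj j).smulRight (EuclideanSpace.single i (1 : ℝ))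

lemma rotGen_apply (i j : Fin n) (x : E n) :
    rotGen i j x = x i • EuclideanSpace.single j (1 : ℝ) - x j • EuclideanSpace.single i (1 : ℝ) :=
  rfl

lemma rotGen_mem_skewAdjoint (i j : Fin n) : rotGen i j ∈ skewAdjoint (E n →L[ℝ] E n) := by
  rw [skewAdjoint.mem_iff, ContinuousLinearMap.star_eq_adjoint, eq_comm,
    ContinuousLinearMap.eq_adjoint_iff]
  intro x y
  simp only [neg_apply, rotGen_apply, inner_neg_left, inner_sub_left,
    inner_sub_right, real_inner_smul_left, real_inner_smul_right, EuclideanSpace.inner_single_left,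
    EuclideanSpace.inner_single_right]
  simp
  ring

/-- The derivative of `g` along the rotation field of the `(i, j)` plane. -/
def rot (i j : Fin n) (g : E n → ℝ) (x : E n) : ℝ := fderiv ℝ g x (rotGen i j x)

lemma continuous_rot {g : E n → ℝ} (hg : ContDiff ℝ 1 g) (i j : Fin n) :
    Continuous (rot i j g) :=
  (hg.continuous_fderiv one_ne_zero).clm_apply (rotGen i j).continuous

lemma contDiff_rot {g : E n → ℝ} {k m : WithTop ℕ∞} (hg : ContDiff ℝ m g) (hkm : k + 1 ≤ m)
    (i j : Fin n) : ContDiff ℝ k (rot i j g) :=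
  (hg.fderiv_right hkm).clm_apply (rotGen i j).contDiff

lemma rot_mul {g h : E n → ℝ} (hg : Differentiable ℝ g) (hh : Differentiable ℝ h)
    (i j : Fin n) (x : E n) :
    rot i j (fun y => g y * h y) x = rot i j g x * h x + g x * rot i j h x := by
  rw [rot, fderiv_fun_mul (hg x) (hh x)]
  simp [rot]
  ring

lemma integral_rot {g : E n → ℝ} (hg : ContDiff ℝ 1 g) (i j : Fin n) :
    ∫ x, rot i j g x ∂sphMeasure n = 0 := by
  set A := rotGen i j
  have hu (t : ℝ) : NormedSpace.exp (t • A) ∈ unitary (E n →L[ℝ] E n) := by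
    let _ : NormedAlgebra ℚ (E n →L[ℝ] E n) := .restrictScalars ℚ ℝ _
    exact NormedSpace.exp_mem_unitary_of_mem_skewAdjoint
      (skewAdjoint.smul_mem t (rotGen_mem_skewAdjoint i j))
  have hnorm (t : ℝ) (x : E n) : ‖NormedSpace.exp (t • A) x‖ = ‖x‖ :=
    (Unitary.linearIsometryEquiv ⟨_, hu t⟩).norm_map x
  have hder (x : E n) (t : ℝ) : HasDerivAt (fun s : ℝ => g (NormedSpace.exp (s • A) x))
      (rot i j g (NormedSpace.exp (t • A) x)) t := by
    have h1 := (hasDerivAt_exp_smul_const' (𝕂 := ℝ) A t).clm_apply (hasDerivAt_const t x)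
    have h2 := ((hg.differentiable one_ne_zero _).hasFDerivAt.comp_hasDerivAt t h1)
    simpa [rot, A, Function.comp_def] using h2
  obtain ⟨C, hC⟩ := (isCompact_sphere (0 : E n) 1).exists_bound_of_continuousOn
    (continuous_rot hg i j).continuousOn
  have hconst (t : ℝ) : ∫ x, g (NormedSpace.exp (t • A) x) ∂sphMeasure n =
      ∫ x, g x ∂sphMeasure n :=
    integral_comp_sphMeasure (Unitary.linearIsometryEquiv ⟨_, hu t⟩) g
  have key := (hasDerivAt_integral_of_dominated_loc_of_deriv_le (μ := sphMeasure n)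
    (F := fun t x => g (NormedSpace.exp (t • A) x))
    (F' := fun t x => rot i j g (NormedSpace.exp (t • A) x)) (x₀ := 0) (s := Set.univ)
    (bound := fun _ => C) univ_mem
    (Eventually.of_forall fun t =>
      (hg.continuous.comp (NormedSpace.exp (t • A)).continuous).aestronglyMeasurable)
    (integrable_sphMeasure (hg.continuous.comp (NormedSpace.exp ((0 : ℝ) • A)).continuous))
    ((continuous_rot hg i j).comp
      (NormedSpace.exp ((0 : ℝ) • A)).continuous).aestronglyMeasurable
    (ae_mem_sphere.mono fun x hx t _ => hC _ (by simpa [hnorm] using hx))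
    (integrable_const C) (Eventually.of_forall fun x t _ => hder x t)).2
  simp only [hconst] at key
  have hz : NormedSpace.exp ((0 : ℝ) • A) = 1 := by
    rw [show (0 : ℝ) • A = 0 from zero_smul ℝ A, NormedSpace.exp_zero]
  have hi : ∫ x, rot i j g (NormedSpace.exp ((0 : ℝ) • A) x) ∂sphMeasure n = 0 :=
    key.unique (hasDerivAt_const _ _)
  rwa [hz] at hi

lemma integral_rot_mul {g h : E n → ℝ} (hg : ContDiff ℝ 1 g) (hh : ContDiff ℝ 1 h)
    (i j : Fin n) :
    ∫ x, rot i j g x * h x ∂sphMeasure n = -∫ x, g x * rot i j h x ∂sphMeasure n := by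
  have h0 : ∫ x, rot i j (fun y => g y * h y) x ∂sphMeasure n = 0 := integral_rot (hg.mul hh) i j
  simp only [rot_mul (hg.differentiable one_ne_zero) (hh.differentiable one_ne_zero)] at h0
  have h1 : Integrable (fun x => rot i j g x * h x) (sphMeasure n) :=
    integrable_sphMeasure ((continuous_rot hg i j).mul hh.continuous)
  have h2 : Integrable (fun x => g x * rot i j h x) (sphMeasure n) :=
    integrable_sphMeasure (hg.continuous.mul (continuous_rot hh i j))
  rw [integral_add h1 h2] at h0
  linarith

lemma sum_norm_sq_rotGen {F : Type*} [NormedAddCommGroup F] [InnerProductSpace ℝ F]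
    (M : E n →L[ℝ] F) (x : E n) :
    ∑ i, ∑ j, ‖M (rotGen i j x)‖ ^ 2 =
      2 * ‖x‖ ^ 2 * ∑ j, ‖M (EuclideanSpace.single j 1)‖ ^ 2 - 2 * ‖M x‖ ^ 2 := by
  set e : Fin n → F := fun j => M (EuclideanSpace.single j 1)
  have hMx : M x = ∑ i, x i • e i := by
    conv_lhs => rw [← (EuclideanSpace.basisFun (Fin n) ℝ).sum_repr x]
    simp [e, map_sum]
  have h1 : ‖M x‖ ^ 2 = ∑ i, ∑ j, x i * x j * ⟪e j, e i⟫ := by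
    rw [← real_inner_self_eq_norm_sq, hMx, sum_inner]
    simp only [inner_sum, real_inner_smul_left, real_inner_smul_right]
    refine Finset.sum_congr rfl fun i _ => Finset.sum_congr rfl fun j _ => ?_
    rw [real_inner_comm]
    ring
  have h2 : ‖x‖ ^ 2 * ∑ j, ‖e j‖ ^ 2 = ∑ i, ∑ j, x i ^ 2 * ‖e j‖ ^ 2 := by
    rw [EuclideanSpace.real_norm_sq_eq, Finset.sum_mul_sum]
  have h3 : ‖x‖ ^ 2 * ∑ j, ‖e j‖ ^ 2 = ∑ i, ∑ j, x j ^ 2 * ‖e i‖ ^ 2 := by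
    rw [h2, Finset.sum_comm]
  have h4 (i j : Fin n) : ‖M (rotGen i j x)‖ ^ 2 =
      x i ^ 2 * ‖e j‖ ^ 2 + x j ^ 2 * ‖e i‖ ^ 2 - 2 * (x i * x j * ⟪e j, e i⟫) := by
    rw [rotGen_apply, map_sub, map_smul, map_smul, norm_sub_sq_real, norm_smul, norm_smul,
      real_inner_smul_left, real_inner_smul_right, mul_pow, mul_pow, Real.norm_eq_abs,
      Real.norm_eq_abs, sq_abs, sq_abs]
    ring
  simp only [h4, Finset.sum_sub_distrib, Finset.sum_add_distrib, ← Finset.mul_sum]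
  simp only [← Finset.mul_sum] at h1 h2 h3
  linarith

lemma inner_rotGen (k l : Fin n) (v y : E n) : ⟪v, rotGen k l y⟫ = y k * v l - y l * v k := by
  simp [rotGen_apply, inner_sub_right, real_inner_smul_right, EuclideanSpace.inner_single_right]

lemma inner_rotGen_self (k l : Fin n) (x : E n) : ⟪x, rotGen k l x⟫ = 0 := by
  rw [inner_rotGen]; ring

lemma sum_wedge_mul_wedge (a b c d : E n) :
    ∑ k, ∑ l, (a k * b l - a l * b k) * (c k * d l - c l * d k) =
      2 * (⟪a, c⟫ * ⟪b, d⟫ - ⟪a, d⟫ * ⟪b, c⟫) := by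
  have h : 2 * (⟪a, c⟫ * ⟪b, d⟫ - ⟪a, d⟫ * ⟪b, c⟫) = ⟪a, c⟫ * ⟪b, d⟫ - ⟪a, d⟫ * ⟪b, c⟫ +
    (⟪b, d⟫ * ⟪a, c⟫ - ⟪b, c⟫ * ⟪a, d⟫) := by ring
  rw [h]
  simp only [PiLp.inner_apply, RCLike.inner_apply, conj_trivial, Finset.sum_mul_sum,
    ← Finset.sum_sub_distrib, ← Finset.sum_add_distrib]
  refine Finset.sum_congr rfl fun i _ => Finset.sum_congr rfl fun j _ => ?_
  ring

lemma rot_eq_inner (k l : Fin n) (f : E n → ℝ) (x : E n) :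
    rot k l f x = ⟪gradient f x, rotGen k l x⟫ := by
  rw [rot, gradient, InnerProductSpace.toDual_symm_apply]

lemma rot_rot_apply {f : E n → ℝ} (hf : ContDiff ℝ 2 f) (i j k l : Fin n) (x : E n) :
    rot i j (rot k l f) x = ⟪hess f x (rotGen i j x), rotGen k l x⟫ +
      ⟪gradient f x, rotGen k l (rotGen i j x)⟫ := by
  have hg : DifferentiableAt ℝ (gradient f) x :=
    (InnerProductSpace.toDual ℝ (E n)).symm.differentiable.differentiableAt.comp x
      ((hf.fderiv_right (m := 1) (by norm_num)).differentiable one_ne_zero x)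
  have h := hg.hasFDerivAt.inner ℝ (rotGen k l).hasFDerivAt
  rw [rot, show rot k l f = fun y => ⟪gradient f y, rotGen k l y⟫ from
    funext (rot_eq_inner k l f), h.fderiv]
  simp [hess, add_comm]

lemma projPerp_apply (x v : E n) : projPerp x v = v - ⟪x, v⟫ • x := by
  simp [projPerp]

lemma sHess_apply_of_inner_eq_zero (f : E n → ℝ) {x v : E n} (h : ⟪x, v⟫ = 0) :
    sHess f x v = hess f x v - ⟪gradient f x, x⟫ • v - ⟪x, hess f x v⟫ • x := by
  simp [sHess, projPerp_apply, h]
  abel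

lemma sHess_apply_self (f : E n → ℝ) {x : E n} (hx : ‖x‖ = 1) : sHess f x x = 0 := by
  simp [sHess, projPerp_apply, hx]

lemma sum_rot_rot_sq {f : E n → ℝ} (hf : ContDiff ℝ 2 f) (i j : Fin n) {x : E n}
    (hx : ‖x‖ = 1) :
    ∑ k, ∑ l, rot i j (rot k l f) x ^ 2 =
      2 * (‖sHess f x (rotGen i j x)‖ ^ 2 + ‖sgrad f x‖ ^ 2 * ‖rotGen i j x‖ ^ 2
        - ⟪sgrad f x, rotGen i j x⟫ ^ 2) := by
  have hxv := inner_rotGen_self i j x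
  rw [sHess_apply_of_inner_eq_zero f hxv]
  simp only [rot_rot_apply hf, sgrad]
  set v := rotGen i j x
  set g := gradient f x
  set w := hess f x v
  have hxx : ⟪x, x⟫ = (1 : ℝ) := by rw [real_inner_self_eq_norm_sq, hx, one_pow]
  simp only [inner_rotGen]
  have expand (k l : Fin n) : (x k * w l - x l * w k + (v k * g l - v l * g k)) ^ 2 =
    (x k * w l - x l * w k) * (x k * w l - x l * w k) +
    (v k * g l - v l * g k) * (v k * g l - v l * g k) +
    2 * ((x k * w l - x l * w k) * (v k * g l - v l * g k)) := by ring
  simp only [expand, Finset.sum_add_distrib, ← Finset.mul_sum, sum_wedge_mul_wedge]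
  simp only [← real_inner_self_eq_norm_sq, inner_sub_left, inner_sub_right, real_inner_smul_left,
    real_inner_smul_right, hxx, hxv, real_inner_comm x v, real_inner_comm x w, real_inner_comm x g,
    real_inner_comm v w, real_inner_comm v g]
  ring

lemma sum_rot_sq (f : E n → ℝ) {x : E n} (hx : ‖x‖ = 1) :
    ∑ i, ∑ j, rot i j f x ^ 2 = 2 * ‖sgrad f x‖ ^ 2 := by
  have h := sum_wedge_mul_wedge x (gradient f x) x (gradient f x)
  simp only [rot_eq_inner, inner_rotGen, pow_two]
  rw [h, ← pow_two, ← real_inner_self_eq_norm_sq, sgrad]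
  have hxx : ⟪x, x⟫ = (1 : ℝ) := by rw [real_inner_self_eq_norm_sq, hx, one_pow]
  simp only [inner_sub_left, inner_sub_right, real_inner_smul_left,
    real_inner_smul_right, hxx, real_inner_comm x (gradient f x)]
  ring

lemma sum_rot_rot_sq_eq {f : E n → ℝ} (hf : ContDiff ℝ 2 f) {x : E n} (hx : ‖x‖ = 1) :
    ∑ i, ∑ j, ∑ k, ∑ l, rot i j (rot k l f) x ^ 2 =
      4 * hsNormSq (sHess f x) + 4 * ((n : ℝ) - 2) * ‖sgrad f x‖ ^ 2 := by
  have h1 := sum_norm_sq_rotGen (sHess f x) x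
  have h2 := sum_norm_sq_rotGen (ContinuousLinearMap.id ℝ (E n)) x
  have h3 := sum_norm_sq_rotGen (innerSL ℝ (sgrad f x)) x
  have h4 : ∑ j, ⟪sgrad f x, EuclideanSpace.single j 1⟫ ^ 2 = ‖sgrad f x‖ ^ 2 := by
    simp [EuclideanSpace.inner_single_right, EuclideanSpace.real_norm_sq_eq]
  have h5 : ⟪sgrad f x, x⟫ = 0 := by
    simp [sgrad, inner_sub_left, real_inner_smul_left, hx]
  simp only [innerSL_apply_apply, Real.norm_eq_abs, sq_abs, h4, h5, hx, sHess_apply_self f hx,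
    ContinuousLinearMap.id_apply, PiLp.norm_single, norm_one, one_pow, Finset.sum_const,
    Finset.card_univ, Fintype.card_fin, nsmul_eq_mul, norm_zero] at h1 h2 h3
  simp only [sum_rot_rot_sq hf _ _ hx, ← Finset.mul_sum, Finset.sum_sub_distrib,
    Finset.sum_add_distrib, h1, h2, h3, hsNormSq]
  ring

/-! ### Rotation fields and the spherical Laplacian on polynomials -/

open MvPolynomial (pderiv)

/-- The derivation `x_i ∂_j - x_j ∂_i` of the polynomial ring. -/
def rotDer (i j : Fin n) : Derivation ℝ (MvPolynomial (Fin n) ℝ) (MvPolynomial (Fin n) ℝ) :=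
  MvPolynomial.X (R := ℝ) i • pderiv j - MvPolynomial.X (R := ℝ) j • pderiv i

/-- The Casimir operator `½ ∑ (x_i ∂_j - x_j ∂_i)²` of the polynomial ring. -/
def polyLap : MvPolynomial (Fin n) ℝ →ₗ[ℝ] MvPolynomial (Fin n) ℝ :=
  (2⁻¹ : ℝ) • ∑ i, ∑ j, (rotDer i j).toLinearMap ∘ₗ (rotDer i j).toLinearMap

lemma rotDer_apply (i j : Fin n) (p : MvPolynomial (Fin n) ℝ) :
    rotDer i j p = MvPolynomial.X i * pderiv j p - MvPolynomial.X j * pderiv i p := rfl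

lemma rotDer_swap (i j : Fin n) (p : MvPolynomial (Fin n) ℝ) :
    rotDer j i p = -rotDer i j p := by
  rw [rotDer_apply, rotDer_apply]; ring

lemma polyLap_apply (p : MvPolynomial (Fin n) ℝ) :
    polyLap p = (2⁻¹ : ℝ) • ∑ i, ∑ j, rotDer i j (rotDer i j p) := by
  simp [polyLap]

lemma polyLap_C (c : ℝ) : polyLap (MvPolynomial.C c : MvPolynomial (Fin n) ℝ) = 0 := by
  simp [polyLap_apply, rotDer_apply]

lemma rotDer_rotDer (i j k l : Fin n) (p : MvPolynomial (Fin n) ℝ) :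
    rotDer i j (rotDer k l p) = rotDer k l (rotDer i j p) +
      ((if j = k then (1 : ℝ) else 0) • rotDer i l p - (if i = k then (1 : ℝ) else 0) • rotDer j l p
        - (if j = l then (1 : ℝ) else 0) • rotDer i k p
        + (if i = l then (1 : ℝ) else 0) • rotDer j k p) := by
  set d : Fin n → Fin n → ℝ := fun a b => if a = b then 1 else 0
  have hd (a b : Fin n) : d a b = d b a := by simp [d, eq_comm]
  have hX (a b m : Fin n) : rotDer a b (MvPolynomial.X m : MvPolynomial (Fin n) ℝ) =
      d b m • MvPolynomial.X a - d a m • MvPolynomial.X b := by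
    simp [rotDer_apply, d, Pi.single_apply, eq_comm]
  have h : ⁅rotDer i j, rotDer k l⁆ = d j k • rotDer i l - d i k • rotDer j l - d j l • rotDer i k
      + d i l • rotDer (n := n) j k := by
    refine MvPolynomial.derivation_ext fun m => ?_
    simp only [Derivation.commutator_apply, Derivation.add_apply, Derivation.sub_apply,
      Derivation.smul_apply, hX, map_sub, Derivation.map_smul]
    simp only [hd k i, hd k j, hd l i, hd l j]
    module
  have h' := congrArg (fun D => D p) h
  simp only [Derivation.commutator_apply, Derivation.add_apply, Derivation.sub_apply,
      Derivation.smul_apply] at h'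
  rw [← h']
  abel

lemma polyLap_rotDer (k l : Fin n) (p : MvPolynomial (Fin n) ℝ) :
    polyLap (rotDer k l p) = rotDer k l (polyLap p) := by
  have h (i j : Fin n) : rotDer i j (rotDer i j (rotDer k l p)) =
      rotDer k l (rotDer i j (rotDer i j p)) +
      ((if j = k then (1 : ℝ) else 0) • (rotDer i l (rotDer i j p) + rotDer i j (rotDer i l p))
      - (if i = k then (1 : ℝ) else 0) • (rotDer j l (rotDer i j p) + rotDer i j (rotDer j l p))
      - (if j = l then (1 : ℝ) else 0) • (rotDer i k (rotDer i j p) + rotDer i j (rotDer i k p))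
      + (if i = l then (1 : ℝ) else 0) • (rotDer j k (rotDer i j p) + rotDer i j (rotDer j k p))) :=
      by
    rw [rotDer_rotDer i j k l p, map_add, rotDer_rotDer i j k l (rotDer i j p)]
    simp only [map_sub, map_add, Derivation.map_smul]
    module
  simp only [polyLap_apply, Derivation.map_smul, map_sum, h, Finset.sum_add_distrib,
    Finset.sum_sub_distrib]
  congr 1
  simp only [ite_smul, one_smul, zero_smul, Finset.sum_ite_eq', Finset.mem_univ, if_true,
    Finset.sum_ite_irrel, Finset.sum_const_zero]
  simp only [← Finset.sum_sub_distrib, ← Finset.sum_add_distrib]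
  refine Finset.sum_congr rfl fun i _ => ?_
  simp only [rotDer_swap i k, rotDer_swap i l, map_neg]
  abel

lemma pderiv_pderiv_comm (i j : Fin n) (p : MvPolynomial (Fin n) ℝ) :
    pderiv i (pderiv j p) = pderiv j (pderiv i p) := by
  have h : ⁅pderiv i, pderiv j⁆ = (0 : Derivation ℝ (MvPolynomial (Fin n) ℝ) _) :=
    MvPolynomial.derivation_ext fun m => by
      rw [Derivation.commutator_apply, MvPolynomial.pderiv_X, MvPolynomial.pderiv_X,
        Pi.single_apply, Pi.single_apply, apply_ite (pderiv i), apply_ite (pderiv j)]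
      simp
  have h' := congrArg (fun D => D p) h
  simpa [Derivation.commutator_apply, sub_eq_zero] using h'

/-- The Euler operator `∑ x_i ∂_i`. -/
def euler : MvPolynomial (Fin n) ℝ →ₗ[ℝ] MvPolynomial (Fin n) ℝ :=
  ∑ i, LinearMap.mulLeft ℝ (MvPolynomial.X i) ∘ₗ (pderiv i).toLinearMap

/-- The Euclidean Laplacian of the polynomial ring. -/
def laplacian : MvPolynomial (Fin n) ℝ →ₗ[ℝ] MvPolynomial (Fin n) ℝ :=
  ∑ i, (pderiv i).toLinearMap ∘ₗ (pderiv i).toLinearMap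

lemma euler_apply (p : MvPolynomial (Fin n) ℝ) :
    euler p = ∑ i, MvPolynomial.X i * pderiv i p := by
  simp [euler]

lemma laplacian_apply (p : MvPolynomial (Fin n) ℝ) :
    laplacian p = ∑ i, pderiv i (pderiv i p) := by
  simp [laplacian]

lemma euler_monomial (s : Fin n →₀ ℕ) (a : ℝ) :
    euler (MvPolynomial.monomial s a) = (s.degree : ℝ) • MvPolynomial.monomial s a := by
  simp only [euler_apply, MvPolynomial.X_mul_pderiv_monomial, ← Finset.sum_smul,
    Finsupp.degree_eq_sum, Nat.cast_smul_eq_nsmul]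

lemma euler_euler (p : MvPolynomial (Fin n) ℝ) :
    euler (euler p) = ∑ i, ∑ j, MvPolynomial.X i * MvPolynomial.X j * pderiv i (pderiv j p)
      + euler p := by
  have h (i : Fin n) : MvPolynomial.X i * pderiv i (euler p) =
      ∑ j, MvPolynomial.X i * MvPolynomial.X j * pderiv i (pderiv j p) +
        MvPolynomial.X i * pderiv i p := by
    rw [euler_apply, map_sum, Finset.mul_sum]
    have (j : Fin n) : MvPolynomial.X i * pderiv i (MvPolynomial.X j * pderiv j p) =
        MvPolynomial.X i * MvPolynomial.X j * pderiv i (pderiv j p) +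
          if i = j then MvPolynomial.X i * pderiv j p else 0 := by
      by_cases h : i = j
      · subst h
        simp; ring
      · simp [MvPolynomial.pderiv_X_of_ne (Ne.symm h), h]; ring
    simp only [this, Finset.sum_add_distrib, Finset.sum_ite_eq, Finset.mem_univ, if_true]
  rw [euler_apply (euler p), Finset.sum_congr rfl fun i _ => h i, Finset.sum_add_distrib,
    ← euler_apply]

lemma polyLap_eq (p : MvPolynomial (Fin n) ℝ) :
    polyLap p = (∑ i, MvPolynomial.X i ^ 2) * laplacian p - euler (euler p)
      - ((n : ℝ) - 2) • euler p := by
  have h (i j : Fin n) : rotDer i j (rotDer i j p) =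
      MvPolynomial.X i ^ 2 * pderiv j (pderiv j p) + MvPolynomial.X j ^ 2 * pderiv i (pderiv i p)
      - (2 : ℝ) • (MvPolynomial.X i * MvPolynomial.X j * pderiv i (pderiv j p))
      - MvPolynomial.X i * pderiv i p - MvPolynomial.X j * pderiv j p
      + if i = j then (2 : ℝ) • (MvPolynomial.X i * pderiv j p) else 0 := by
    have h2 (q : MvPolynomial (Fin n) ℝ) : (2 : ℝ) • q = 2 * q := by
      rw [two_smul, two_mul]
    by_cases hij : i = j
    · subst hij
      simp [rotDer_apply, h2]; ring
    · simp only [rotDer_apply, MvPolynomial.pderiv_mul, map_sub, MvPolynomial.pderiv_X_self,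
        MvPolynomial.pderiv_X_of_ne hij, MvPolynomial.pderiv_X_of_ne (Ne.symm hij), h2,
        pderiv_pderiv_comm j i p, hij, if_false]
      ring
  have h1 : ∑ i : Fin n, ∑ j : Fin n, MvPolynomial.X i ^ 2 * pderiv j (pderiv j p) =
      (∑ i, MvPolynomial.X i ^ 2) * laplacian p := by
    rw [laplacian_apply, Finset.sum_mul_sum]
  have h1' : ∑ i : Fin n, ∑ j : Fin n, MvPolynomial.X j ^ 2 * pderiv i (pderiv i p) =
      (∑ i, MvPolynomial.X i ^ 2) * laplacian p := by
    rw [← h1, Finset.sum_comm]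
  rw [polyLap_apply, euler_euler]
  simp only [h, Finset.sum_add_distrib, Finset.sum_sub_distrib, h1, h1', Finset.sum_const,
    Finset.card_univ, Fintype.card_fin, ← Finset.smul_sum, Finset.sum_ite_eq, Finset.mem_univ,
    if_true, ← euler_apply]
  rw [← Nat.cast_smul_eq_nsmul ℝ]
  module

lemma totalDegree_pderiv_le (i : Fin n) (p : MvPolynomial (Fin n) ℝ) :
    (pderiv i p).totalDegree ≤ p.totalDegree - 1 := by
  refine Finset.sup_le fun m hm => ?_
  rw [MvPolynomial.mem_support_iff, MvPolynomial.coeff_pderiv] at hm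
  have h := MvPolynomial.le_totalDegree
    (MvPolynomial.mem_support_iff.2 (left_ne_zero_of_mul hm))
  rw [Finsupp.sum_add_index' (fun _ => rfl) (fun _ _ _ => rfl), Finsupp.sum_single_index rfl] at h
  omega

/-- The negative of the eigenvalue of the spherical Laplacian on spherical harmonics of
degree `k`. -/
def sphEigenvalue (n k : ℕ) : ℝ := k * (k + n - 2)

/-- The polynomial `r` of lower degree such that `Δ_S p = -λ_N p + r` on the sphere, for `p` of
degree at most `N`. -/
def lowerPart (N : ℕ) : MvPolynomial (Fin n) ℝ →ₗ[ℝ] MvPolynomial (Fin n) ℝ :=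
  laplacian - euler ∘ₗ euler - ((n : ℝ) - 2) • euler + sphEigenvalue n N • LinearMap.id

lemma lowerPart_mem {N : ℕ} {p : MvPolynomial (Fin n) ℝ}
    (hp : p ∈ MvPolynomial.restrictTotalDegree (Fin n) ℝ (N + 1)) :
    lowerPart (N + 1) p ∈ MvPolynomial.restrictTotalDegree (Fin n) ℝ N := by
  rw [MvPolynomial.mem_restrictTotalDegree] at hp
  rw [p.as_sum, map_sum]
  refine Submodule.sum_mem _ fun s hs => ?_
  have hs' : s.degree ≤ N + 1 := (MvPolynomial.le_totalDegree hs).trans hp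
  set q := MvPolynomial.monomial s (p.coeff s)
  have hq : q.totalDegree ≤ s.degree := MvPolynomial.totalDegree_monomial_le _ _
  have h : lowerPart (N + 1) q = laplacian q +
      (sphEigenvalue n (N + 1) - sphEigenvalue n s.degree) • q := by
    simp only [lowerPart, LinearMap.add_apply, LinearMap.sub_apply, LinearMap.smul_apply,
      LinearMap.comp_apply, LinearMap.id_apply, q, euler_monomial, map_smul, sphEigenvalue]
    module
  rw [h]
  refine Submodule.add_mem _ ?_ ?_
  · rw [laplacian_apply]
    refine Submodule.sum_mem _ fun i _ => ?_
    rw [MvPolynomial.mem_restrictTotalDegree]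
    have h1 := totalDegree_pderiv_le i (pderiv i q)
    have h2 := totalDegree_pderiv_le i q
    omega
  · rcases hs'.eq_or_lt with h' | h'
    · simp [h']
    · refine Submodule.smul_mem _ _ ?_
      rw [MvPolynomial.mem_restrictTotalDegree]
      omega

/-! ### Integration by parts for the spherical Laplacian -/

/-- The operator `½ ∑ (x_i ∂_j - x_j ∂_i)²`, which restricts to the spherical Laplacian. -/
def casimir (g : E n → ℝ) (x : E n) : ℝ := 2⁻¹ * ∑ i, ∑ j, rot i j (rot i j g) x

/-- The function on `ℝⁿ` given by a polynomial. -/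
def polyFun (p : MvPolynomial (Fin n) ℝ) (x : E n) : ℝ := MvPolynomial.eval x.ofLp p

lemma contDiff_polyFun (p : MvPolynomial (Fin n) ℝ) (m : WithTop ℕ∞) :
    ContDiff ℝ m (polyFun p) := by
  induction p using MvPolynomial.induction_on with
  | C c =>
    have : polyFun (MvPolynomial.C c : MvPolynomial (Fin n) ℝ) = fun _ => c := by
      ext y; simp [polyFun]
    rw [this]
    exact contDiff_const
  | add p q hp hq =>
    have : polyFun (p + q) = fun y => polyFun p y + polyFun q y := by
      ext y; simp [polyFun]
    rw [this]
    exact hp.add hq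
  | mul_X p i hp =>
    have : polyFun (p * MvPolynomial.X i) = fun y => polyFun p y * y i := by
      ext y; simp [polyFun]
    rw [this]
    exact hp.mul (EuclideanSpace.proj (𝕜 := ℝ) i).contDiff

lemma differentiable_polyFun (p : MvPolynomial (Fin n) ℝ) : Differentiable ℝ (polyFun p) :=
  (contDiff_polyFun p 1).differentiable one_ne_zero

lemma continuous_polyFun (p : MvPolynomial (Fin n) ℝ) : Continuous (polyFun p) :=
  (contDiff_polyFun p 0).continuous

lemma rot_polyFun (i j : Fin n) (p : MvPolynomial (Fin n) ℝ) :
    rot i j (polyFun p) = polyFun (rotDer i j p) := by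
  induction p using MvPolynomial.induction_on with
  | C c =>
    ext x
    have : polyFun (MvPolynomial.C c : MvPolynomial (Fin n) ℝ) = fun _ => c := by
      ext y; simp [polyFun]
    simp [rot, this]
    simp [polyFun]
  | add p q hp hq =>
    ext x
    have : polyFun (p + q) = fun y => polyFun p y + polyFun q y := by
      ext y; simp [polyFun]
    rw [this, rot, fderiv_fun_add (differentiable_polyFun p x) (differentiable_polyFun q x)]
    have h1 := congrFun hp x
    have h2 := congrFun hq x
    rw [rot] at h1 h2
    simp [h1, h2, polyFun]
  | mul_X p k hp =>
    ext x
    have : polyFun (p * MvPolynomial.X k) = fun y => polyFun p y * y k := by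
      ext y; simp [polyFun]
    have hk : Differentiable ℝ fun y : E n => y k :=
      (EuclideanSpace.proj (𝕜 := ℝ) k).differentiable
    have hk' : rot i j (fun y => y k) x = rotGen i j x k := by
      rw [rot]
      exact congrFun (congrArg DFunLike.coe (EuclideanSpace.proj (𝕜 := ℝ) k).fderiv) _
    rw [this, rot_mul (differentiable_polyFun p) hk, hp, hk']
    simp only [polyFun, rotGen_apply, rotDer_apply, Derivation.leibniz, MvPolynomial.pderiv_X,
      Pi.single_apply, smul_eq_mul, PiLp.sub_apply, PiLp.smul_apply, PiLp.single_apply,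
      map_add, map_sub, map_mul, MvPolynomial.eval_X, apply_ite, map_one, map_zero,
      eq_comm (a := k)]
    split_ifs <;> ring

lemma casimir_polyFun (p : MvPolynomial (Fin n) ℝ) :
    casimir (polyFun p) = polyFun (polyLap p) := by
  ext x
  simp only [casimir, rot_polyFun]
  simp [polyFun, polyLap_apply, MvPolynomial.smul_eval]

lemma polyFun_polyLap_of_norm_eq_one (N : ℕ) (p : MvPolynomial (Fin n) ℝ) {x : E n}
    (hx : ‖x‖ = 1) :
    polyFun (polyLap p) x = polyFun (lowerPart N p) x - sphEigenvalue n N * polyFun p x := by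
  have h : ∑ i, x i ^ 2 = 1 := by rw [← EuclideanSpace.real_norm_sq_eq, hx, one_pow]
  simp [polyFun, polyLap_eq, lowerPart, MvPolynomial.smul_eval, h]

lemma continuous_casimir {g : E n → ℝ} (hg : ContDiff ℝ 2 g) : Continuous (casimir g) :=
  continuous_const.mul (continuous_finsetSum _ fun i _ => continuous_finsetSum _ fun j _ =>
    continuous_rot (contDiff_rot hg (by norm_num) i j) i j)

lemma integral_casimir_mul {f h : E n → ℝ} (hf : ContDiff ℝ 2 f) (hh : ContDiff ℝ 1 h) :
    ∫ x, casimir f x * h x ∂sphMeasure n =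
      -(2⁻¹ * ∑ i, ∑ j, ∫ x, rot i j f x * rot i j h x ∂sphMeasure n) := by
  have hr (i j : Fin n) : ContDiff ℝ 1 (rot i j f) := contDiff_rot hf (by norm_num) i j
  have hi (i j : Fin n) : Integrable (fun x => rot i j (rot i j f) x * h x) (sphMeasure n) :=
    integrable_sphMeasure ((continuous_rot (hr i j) i j).mul hh.continuous)
  simp only [casimir, mul_assoc, Finset.sum_mul, integral_const_mul]
  rw [integral_finsetSum _ fun i _ => integrable_finsetSum _ fun j _ => hi i j]
  simp only [integral_finsetSum _ fun j _ => hi _ j, integral_rot_mul (hr _ _) hh,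
    Finset.sum_neg_distrib, mul_neg]

lemma integral_casimir_mul_comm {f h : E n → ℝ} (hf : ContDiff ℝ 2 f) (hh : ContDiff ℝ 2 h) :
    ∫ x, casimir f x * h x ∂sphMeasure n = ∫ x, f x * casimir h x ∂sphMeasure n := by
  have h2 : (1 : WithTop ℕ∞) ≤ 2 := by norm_num
  rw [integral_casimir_mul hf (hh.of_le h2)]
  simp only [mul_comm (f _)]
  rw [integral_casimir_mul hh (hf.of_le h2)]
  simp only [mul_comm (rot _ _ f _)]

lemma integral_casimir_mul_self {f : E n → ℝ} (hf : ContDiff ℝ 2 f) :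
    ∫ x, casimir f x * f x ∂sphMeasure n = -∫ x, ‖sgrad f x‖ ^ 2 ∂sphMeasure n := by
  have h1 : ContDiff ℝ 1 f := hf.of_le (by norm_num)
  have hi (i j : Fin n) : Integrable (fun x => rot i j f x ^ 2) (sphMeasure n) :=
    integrable_sphMeasure ((continuous_rot h1 i j).pow 2)
  rw [integral_casimir_mul hf h1]
  simp only [← pow_two]
  have h : ∫ x, ∑ i, ∑ j, rot i j f x ^ 2 ∂sphMeasure n =
      2 * ∫ x, ‖sgrad f x‖ ^ 2 ∂sphMeasure n := by
    rw [← integral_const_mul]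
    exact integral_congr_sphere fun x hx => sum_rot_sq f hx
  rw [integral_finsetSum _ fun i _ => integrable_finsetSum _ fun j _ => hi i j] at h
  simp only [integral_finsetSum _ fun j _ => hi _ j] at h
  rw [h]
  ring

lemma sum_integral_rot_rot_mul {f : E n → ℝ} (hf : ContDiff ℝ 2 f)
    (p : MvPolynomial (Fin n) ℝ) :
    ∑ k, ∑ l, ∑ i, ∑ j, ∫ x, rot i j (rot k l f) x * polyFun (rotDer i j (rotDer k l p)) x
        ∂sphMeasure n = 4 * ∫ x, casimir f x * polyFun (polyLap p) x ∂sphMeasure n := by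
  have h1 : ContDiff ℝ 1 f := hf.of_le (by norm_num)
  have hkl (k l : Fin n) :
      ∑ i, ∑ j, ∫ x, rot i j (rot k l f) x * polyFun (rotDer i j (rotDer k l p)) x ∂sphMeasure n =
        -2 * ∫ x, rot k l f x * rot k l (polyFun (polyLap p)) x ∂sphMeasure n := by
    have hg : ContDiff ℝ 1 (rot k l f) := contDiff_rot hf (by norm_num) k l
    have h := integral_casimir_mul (contDiff_polyFun (rotDer k l p) 2) hg
    rw [casimir_polyFun, polyLap_rotDer] at h
    simp only [rot_polyFun, mul_comm (rot _ _ (rot k l f) _), mul_comm (rot k l f _)] at h ⊢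
    linarith
  simp only [hkl, ← Finset.mul_sum]
  rw [integral_casimir_mul hf (contDiff_polyFun _ 1)]
  ring

/-! ### A comparison along a filtration by eigenspaces -/

lemma mul_neg_inner_starProjection_le {H : Type*} [NormedAddCommGroup H] [InnerProductSpace ℝ H]
    {V : ℕ → Submodule ℝ H} [∀ N, (V N).HasOrthogonalProjection] (hV : Monotone V)
    {a b : H} {c : ℕ → ℝ} {μ : ℝ}
    (h0 : ∀ w ∈ V 0, ⟪b, w⟫ = 0)
    (hW : ∀ N, ∀ w ∈ V (N + 1), w ∈ (V N)ᗮ → ⟪b, w⟫ = -(c N * ⟪a, w⟫))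
    (hc : ∀ N, (μ ≤ c N ∧ 0 < c N) ∨ ∀ w ∈ V (N + 1), w ∈ (V N)ᗮ → ⟪a, w⟫ = 0) (N : ℕ) :
    μ * -⟪(V N).starProjection b, a⟫ ≤ ‖(V N).starProjection b‖ ^ 2 := by
  induction N with
  | zero =>
    have h : (V 0).starProjection b = 0 :=
      Submodule.eq_starProjection_of_mem_of_inner_eq_zero (zero_mem _) (by simpa using h0)
    simp [h]
  | succ N ih =>
    set u := (V N).starProjection b
    set w := (V (N + 1)).starProjection b - u with hw
    have hu : u ∈ V N := Submodule.starProjection_apply_mem _ b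
    have hw1 : w ∈ V (N + 1) :=
      sub_mem (Submodule.starProjection_apply_mem _ b) (hV (Nat.le_succ N) hu)
    have hw2 : w ∈ (V N)ᗮ := by
      have h1 := Submodule.sub_starProjection_mem_orthogonal (K := V N) b
      have h2 := Submodule.orthogonal_le (hV (Nat.le_succ N))
        (Submodule.sub_starProjection_mem_orthogonal (K := V (N + 1)) b)
      convert sub_mem h1 h2 using 1
      rw [hw]; abel
    have huw : ⟪u, w⟫ = 0 := hw2 u hu
    have hs : (V (N + 1)).starProjection b = u + w := by rw [hw]; abel
    have hbw : ⟪b, w⟫ = ‖w‖ ^ 2 := by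
      have h := Submodule.starProjection_inner_eq_zero (K := V (N + 1)) b w hw1
      rw [inner_sub_left, hs, inner_add_left, huw, real_inner_self_eq_norm_sq] at h
      linarith
    have hn : ‖u + w‖ ^ 2 = ‖u‖ ^ 2 + ‖w‖ ^ 2 := by
      rw [norm_add_sq_real, huw]; ring
    have hcw := hW N w hw1 hw2
    rw [hs, hn, inner_add_left, real_inner_comm a w]
    have key : μ * -⟪a, w⟫ ≤ ‖w‖ ^ 2 := by
      rcases hc N with ⟨h1, h2⟩ | h
      · have h3 : 0 ≤ c N * -⟪a, w⟫ := by nlinarith [sq_nonneg ‖w‖]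
        nlinarith [nonneg_of_mul_nonneg_right h3 h2]
      · rw [h w hw1 hw2]; simp
    linarith

/-! ### Polynomials in `L²` of the sphere -/

/-- The class in `L²(σ_{n-1})` of a continuous function. -/
def toL2 (g : E n → ℝ) (hg : Continuous g) : Lp ℝ 2 (sphMeasure n) := (memLp_sphMeasure hg 2).toLp g

lemma inner_toL2 {g h : E n → ℝ} (hg : Continuous g) (hh : Continuous h) :
    ⟪toL2 g hg, toL2 h hh⟫ = ∫ x, g x * h x ∂sphMeasure n := by
  rw [L2.inner_def]
  refine integral_congr_ae ?_
  filter_upwards [(memLp_sphMeasure hg 2).coeFn_toLp, (memLp_sphMeasure hh 2).coeFn_toLp]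
    with x h1 h2
  rw [toL2, toL2, h1, h2]
  exact mul_comm _ _

lemma toL2_congr {g h : E n → ℝ} (hg : Continuous g) (hh : Continuous h)
    (H : ∀ x, ‖x‖ = 1 → g x = h x) : toL2 g hg = toL2 h hh :=
  MemLp.toLp_congr _ _ (ae_mem_sphere.mono fun x hx => H x (by simpa using hx))

/-- The class in `L²(σ_{n-1})` of a polynomial. -/
def polyL2 : MvPolynomial (Fin n) ℝ →ₗ[ℝ] Lp ℝ 2 (sphMeasure n) where
  toFun p := toL2 (polyFun p) (continuous_polyFun p)
  map_add' p q := by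
    rw [toL2, toL2, toL2, ← MemLp.toLp_add]
    exact MemLp.toLp_congr _ _ (Eventually.of_forall fun x => by simp [polyFun])
  map_smul' c p := by
    rw [toL2, toL2, RingHom.id_apply, ← MemLp.toLp_const_smul]
    exact MemLp.toLp_congr _ _ (Eventually.of_forall fun x => by
      simp [polyFun, MvPolynomial.smul_eval])

lemma polyL2_apply (p : MvPolynomial (Fin n) ℝ) :
    polyL2 p = toL2 (polyFun p) (continuous_polyFun p) := rfl

/-- The space of restrictions to the sphere of polynomials of degree at most `N`. -/
def polySpace (n N : ℕ) : Submodule ℝ (Lp ℝ 2 (sphMeasure n)) :=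
  (MvPolynomial.restrictTotalDegree (Fin n) ℝ N).map polyL2

instance finiteDimensional_polySpace (N : ℕ) : FiniteDimensional ℝ (polySpace n N) := by
  unfold polySpace
  infer_instance

lemma polySpace_mono : Monotone (polySpace n) := fun M N h =>
  Submodule.map_mono fun p hp => by
    rw [MvPolynomial.mem_restrictTotalDegree] at hp ⊢
    exact hp.trans h

lemma polyL2_mem_polySpace {N : ℕ} {p : MvPolynomial (Fin n) ℝ}
    (hp : p ∈ MvPolynomial.restrictTotalDegree (Fin n) ℝ N) : polyL2 p ∈ polySpace n N :=
  Submodule.mem_map_of_mem hp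

lemma exists_polyFun_near {g : E n → ℝ} (hg : Continuous g) {ε : ℝ} (hε : 0 < ε) :
    ∃ p : MvPolynomial (Fin n) ℝ, ∀ x ∈ sphere (0 : E n) 1, ‖polyFun p x - g x‖ < ε := by
  let Φ : MvPolynomial (Fin n) ℝ →ₐ[ℝ] C(E n, ℝ) :=
    MvPolynomial.aeval fun i => ⟨fun x => x i, by fun_prop⟩
  have hΦ (p : MvPolynomial (Fin n) ℝ) (x : E n) : Φ p x = polyFun p x := by
    induction p using MvPolynomial.induction_on with
    | C c => simp [Φ, polyFun]
    | add p q hp hq => simp [hp, hq, polyFun]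
    | mul_X p i hp => rw [map_mul, ContinuousMap.mul_apply, hp]; simp [Φ, polyFun]
  have hsep : Φ.range.SeparatesPoints := fun x y hxy => by
    obtain ⟨i, hi⟩ : ∃ i, x i ≠ y i := by
      by_contra! h
      exact hxy (PiLp.ext h)
    exact ⟨Φ (MvPolynomial.X i), ⟨_, ⟨_, rfl⟩, rfl⟩, by simpa [Φ] using hi⟩
  obtain ⟨_, ⟨p, rfl⟩, hp⟩ :=
    ContinuousMap.exists_mem_subalgebra_near_continuous_of_isCompact_of_separatesPoints hsep
      ⟨g, hg⟩ (isCompact_sphere (0 : E n) 1) hε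
  exact ⟨p, fun x hx => by simpa [hΦ] using hp x hx⟩

lemma toL2_mem_closure {g : E n → ℝ} (hg : Continuous g) :
    toL2 g hg ∈ (⨆ N, polySpace n N).topologicalClosure := by
  rw [← SetLike.mem_coe, Submodule.topologicalClosure_coe, Metric.mem_closure_iff]
  intro ε hε
  obtain ⟨δ, hδ, hδε⟩ : ∃ δ : ℝ, 0 < δ ∧
      (measureUnivNNReal (sphMeasure n) : ℝ) ^ (ENNReal.toReal 2)⁻¹ * δ < ε := by
    set C := (measureUnivNNReal (sphMeasure n) : ℝ) ^ (ENNReal.toReal 2)⁻¹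
    have hC : 0 ≤ C := by positivity
    refine ⟨ε / (C + 1), by positivity, ?_⟩
    rw [mul_div_assoc', div_lt_iff₀ (by positivity)]
    nlinarith
  obtain ⟨p, hp⟩ := exists_polyFun_near hg hδ
  refine ⟨polyL2 p, ?_, ?_⟩
  · exact Submodule.mem_iSup_of_mem p.totalDegree
      (polyL2_mem_polySpace ((MvPolynomial.mem_restrictTotalDegree _ _ _).2 le_rfl))
  · rw [dist_comm, dist_eq_norm]
    refine (Lp.norm_le_of_ae_bound hδ.le ?_).trans_lt hδε
    filter_upwards [ae_mem_sphere, Lp.coeFn_sub (polyL2 p) (toL2 g hg),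
      (memLp_sphMeasure hg 2).coeFn_toLp,
      (memLp_sphMeasure (continuous_polyFun p) 2).coeFn_toLp] with x hx h1 h2 h3
    rw [h1, Pi.sub_apply, polyL2_apply, toL2, toL2, h2, h3]
    exact (hp x hx).le

lemma tendsto_starProjection_toL2 {g : E n → ℝ} (hg : Continuous g) :
    Tendsto (fun N => (polySpace n N).starProjection (toL2 g hg)) atTop (nhds (toL2 g hg)) := by
  have h := Submodule.starProjection_tendsto_closure_iSup (polySpace n) polySpace_mono (toL2 g hg)
  rwa [Submodule.starProjection_eq_self_iff.2 (toL2_mem_closure hg)] at h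

lemma polyL2_polyLap (N : ℕ) (p : MvPolynomial (Fin n) ℝ) :
    polyL2 (polyLap p) = polyL2 (lowerPart N p) - sphEigenvalue n N • polyL2 p := by
  rw [← map_smul, ← map_sub]
  refine toL2_congr (continuous_polyFun _) (continuous_polyFun _) fun x hx => ?_
  rw [polyFun_polyLap_of_norm_eq_one N p hx]
  simp [polyFun, MvPolynomial.smul_eval]

lemma polyL2_polyLap_mem {N : ℕ} {p : MvPolynomial (Fin n) ℝ}
    (hp : p ∈ MvPolynomial.restrictTotalDegree (Fin n) ℝ N) :
    polyL2 (polyLap p) ∈ polySpace n N := by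
  cases N with
  | zero =>
    rw [MvPolynomial.mem_restrictTotalDegree, Nat.le_zero,
      MvPolynomial.totalDegree_eq_zero_iff_eq_C] at hp
    rw [hp, polyLap_C, map_zero]
    exact zero_mem _
  | succ N =>
    rw [polyL2_polyLap (N + 1)]
    exact sub_mem (polySpace_mono (Nat.le_succ N) (polyL2_mem_polySpace (lowerPart_mem hp)))
      (Submodule.smul_mem _ _ (polyL2_mem_polySpace hp))

lemma inner_casimir_polyL2 {f : E n → ℝ} (hf : ContDiff ℝ 2 f) (p : MvPolynomial (Fin n) ℝ) :
    ⟪toL2 (casimir f) (continuous_casimir hf), polyL2 p⟫ =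
      ⟪toL2 f hf.continuous, polyL2 (polyLap p)⟫ := by
  rw [polyL2_apply, polyL2_apply, inner_toL2, inner_toL2,
    integral_casimir_mul_comm hf (contDiff_polyFun p 2), casimir_polyFun]

lemma inner_polyL2_polyLap (p q : MvPolynomial (Fin n) ℝ) :
    ⟪polyL2 (polyLap p), polyL2 q⟫ = ⟪polyL2 p, polyL2 (polyLap q)⟫ := by
  have h := inner_casimir_polyL2 (contDiff_polyFun p 2) q
  simpa only [casimir_polyFun, polyL2_apply] using h

lemma polyL2_lowerPart_eq_zero {N : ℕ} {p : MvPolynomial (Fin n) ℝ}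
    (hp : p ∈ MvPolynomial.restrictTotalDegree (Fin n) ℝ (N + 1))
    (hpo : polyL2 p ∈ (polySpace n N)ᗮ) : polyL2 (lowerPart (N + 1) p) = 0 := by
  have hq := lowerPart_mem hp
  have h1 := hpo _ (polyL2_polyLap_mem hq)
  have h2 := hpo _ (polyL2_mem_polySpace hq)
  rw [inner_polyL2_polyLap, polyL2_polyLap (N + 1), inner_sub_right, inner_smul_right, h2,
    mul_zero, sub_zero] at h1
  exact inner_self_eq_zero.1 h1

lemma inner_casimir_of_mem_orthogonal {f : E n → ℝ} (hf : ContDiff ℝ 2 f) {N : ℕ}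
    {w : Lp ℝ 2 (sphMeasure n)} (hw : w ∈ polySpace n (N + 1)) (hwo : w ∈ (polySpace n N)ᗮ) :
    ⟪toL2 (casimir f) (continuous_casimir hf), w⟫ =
      -(sphEigenvalue n (N + 1) * ⟪toL2 f hf.continuous, w⟫) := by
  obtain ⟨p, hp, rfl⟩ := hw
  rw [inner_casimir_polyL2 hf, polyL2_polyLap (N + 1), polyL2_lowerPart_eq_zero hp hwo, zero_sub,
    inner_neg_right, inner_smul_right]

lemma inner_casimir_of_mem_polySpace_zero {f : E n → ℝ} (hf : ContDiff ℝ 2 f)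
    {w : Lp ℝ 2 (sphMeasure n)} (hw : w ∈ polySpace n 0) :
    ⟪toL2 (casimir f) (continuous_casimir hf), w⟫ = 0 := by
  obtain ⟨p, hp, rfl⟩ := hw
  rw [SetLike.mem_coe, MvPolynomial.mem_restrictTotalDegree, Nat.le_zero,
    MvPolynomial.totalDegree_eq_zero_iff_eq_C] at hp
  rw [inner_casimir_polyL2 hf, hp, polyLap_C, map_zero, inner_zero_right]

lemma inner_eq_zero_of_orthogonal_linear (hn : 2 ≤ n) {f : E n → ℝ} (hf : Continuous f)
    (hlin : ∀ v : E n, ∫ θ, ⟪v, θ⟫ * f θ ∂sphMeasure n = 0)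
    {w : Lp ℝ 2 (sphMeasure n)} (hw : w ∈ polySpace n 1) (hwo : w ∈ (polySpace n 0)ᗮ) :
    ⟪toL2 f hf, w⟫ = 0 := by
  obtain ⟨p, hp, rfl⟩ := hw
  have h0 := polyL2_lowerPart_eq_zero (N := 0) hp hwo
  rw [SetLike.mem_coe, MvPolynomial.mem_restrictTotalDegree] at hp
  have hd (i : Fin n) : ∃ v : ℝ, pderiv i p = MvPolynomial.C v :=
    ⟨_, MvPolynomial.totalDegree_eq_zero_iff_eq_C.1
      (by have := totalDegree_pderiv_le i p; omega)⟩
  choose v hv using hd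
  have hE : euler (euler p) = euler p := by simp [euler_euler, hv]
  have hL : laplacian p = 0 := by simp [laplacian_apply, hv]
  have hl : ⟪toL2 f hf, polyL2 (euler p)⟫ = 0 := by
    rw [polyL2_apply, inner_toL2, ← hlin (WithLp.toLp 2 v)]
    refine integral_congr_ae (Eventually.of_forall fun x => ?_)
    simp only [euler_apply, hv, polyFun, map_sum, map_mul, MvPolynomial.eval_X,
      MvPolynomial.eval_C, PiLp.inner_apply, RCLike.inner_apply, conj_trivial]
    exact mul_comm _ _
  have h1 : lowerPart 1 p = ((n : ℝ) - 1) • p - ((n : ℝ) - 1) • euler p := by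
    simp only [lowerPart, LinearMap.add_apply, LinearMap.sub_apply, LinearMap.comp_apply,
      LinearMap.smul_apply, LinearMap.id_apply, hE, hL, sphEigenvalue]
    push_cast
    module
  rw [h1, map_sub, map_smul, map_smul] at h0
  have h2 : ⟪toL2 f hf, ((n : ℝ) - 1) • polyL2 p - ((n : ℝ) - 1) • polyL2 (euler p)⟫ = 0 := by
    rw [h0, inner_zero_right]
  rw [inner_sub_right, inner_smul_right, inner_smul_right, hl, mul_zero, sub_zero] at h2
  have hn' : (2 : ℝ) ≤ n := by exact_mod_cast hn
  exact (mul_eq_zero.1 h2).resolve_left (by linarith)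

lemma sphEigenvalue_succ_ge (hn : 2 ≤ n) (N : ℕ) : (n : ℝ) - 1 ≤ sphEigenvalue n (N + 1) := by
  have hn' : (2 : ℝ) ≤ n := by exact_mod_cast hn
  have hN : (0 : ℝ) ≤ N := N.cast_nonneg
  rw [sphEigenvalue]
  push_cast
  nlinarith

lemma sphEigenvalue_add_two_ge (hn : 2 ≤ n) (N : ℕ) : 2 * (n : ℝ) ≤ sphEigenvalue n (N + 2) := by
  have hn' : (2 : ℝ) ≤ n := by exact_mod_cast hn
  have hN : (0 : ℝ) ≤ N := N.cast_nonneg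
  rw [sphEigenvalue]
  push_cast
  nlinarith

lemma starProjection_casimir {f : E n → ℝ} (hf : ContDiff ℝ 2 f) {N : ℕ}
    {p : MvPolynomial (Fin n) ℝ} (hp : p ∈ MvPolynomial.restrictTotalDegree (Fin n) ℝ N)
    (hpf : (polySpace n N).starProjection (toL2 f hf.continuous) = polyL2 p) :
    (polySpace n N).starProjection (toL2 (casimir f) (continuous_casimir hf)) =
      polyL2 (polyLap p) := by
  refine Submodule.eq_starProjection_of_mem_of_inner_eq_zero (polyL2_polyLap_mem hp) ?_
  rintro _ ⟨q, hq, rfl⟩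
  rw [inner_sub_left, inner_casimir_polyL2 hf, inner_polyL2_polyLap, ← hpf, ← inner_sub_left]
  exact Submodule.starProjection_inner_eq_zero _ _ (polyL2_polyLap_mem hq)

lemma sum_comm_pairs {ι : Type*} [Fintype ι] (F : ι → ι → ι → ι → ℝ) :
    ∑ i, ∑ j, ∑ k, ∑ l, F i j k l = ∑ k, ∑ l, ∑ i, ∑ j, F i j k l := by
  have h (i : ι) : ∑ j, ∑ k, ∑ l, F i j k l = ∑ k, ∑ l, ∑ j, F i j k l := by
    rw [Finset.sum_comm]
    exact Finset.sum_congr rfl fun k _ => Finset.sum_comm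
  simp only [h]
  rw [Finset.sum_comm]
  exact Finset.sum_congr rfl fun k _ => Finset.sum_comm

/-- A Bessel inequality for the second rotational derivatives. -/
lemma norm_starProjection_casimir_sq_le {f : E n → ℝ} (hf : ContDiff ℝ 2 f) (N : ℕ) :
    4 * ‖(polySpace n N).starProjection (toL2 (casimir f) (continuous_casimir hf))‖ ^ 2 ≤
      ∑ k, ∑ l, ∑ i, ∑ j, ∫ x, rot i j (rot k l f) x ^ 2 ∂sphMeasure n := by
  set b := toL2 (casimir f) (continuous_casimir hf) with hb
  obtain ⟨p, hp, hpf⟩ := (polySpace n N).starProjection_apply_mem (toL2 f hf.continuous)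
  have hP : (polySpace n N).starProjection b = polyL2 (polyLap p) :=
    starProjection_casimir hf hp hpf.symm
  have hbp : ⟪b, polyL2 (polyLap p)⟫ = ‖polyL2 (polyLap p)‖ ^ 2 := by
    have h := Submodule.starProjection_inner_eq_zero (K := polySpace n N) b _
      (polyL2_polyLap_mem hp)
    rw [hP, inner_sub_left, real_inner_self_eq_norm_sq] at h
    linarith
  have hpp := real_inner_self_eq_norm_sq (polyL2 (polyLap p))
  have h1 := sum_integral_rot_rot_mul hf p
  have h2 := sum_integral_rot_rot_mul (contDiff_polyFun p 2) p
  rw [hb, polyL2_apply, inner_toL2, ← polyL2_apply] at hbp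
  rw [polyL2_apply, inner_toL2, ← polyL2_apply] at hpp
  rw [hbp] at h1
  simp only [casimir_polyFun, rot_polyFun] at h2
  rw [hpp] at h2
  have h3 : ∑ k, ∑ l, ∑ i, ∑ j, ∫ x, (2 * (rot i j (rot k l f) x *
      polyFun (rotDer i j (rotDer k l p)) x) - polyFun (rotDer i j (rotDer k l p)) x *
      polyFun (rotDer i j (rotDer k l p)) x) ∂sphMeasure n ≤
      ∑ k, ∑ l, ∑ i, ∑ j, ∫ x, rot i j (rot k l f) x ^ 2 ∂sphMeasure n := by
    refine Finset.sum_le_sum fun k _ => Finset.sum_le_sum fun l _ =>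
      Finset.sum_le_sum fun i _ => Finset.sum_le_sum fun j _ => ?_
    have hc1 : Continuous (rot i j (rot k l f)) :=
      continuous_rot (contDiff_rot hf (by norm_num) k l) i j
    have hc2 := continuous_polyFun (rotDer i j (rotDer k l p))
    refine integral_mono (integrable_sphMeasure ?_) (integrable_sphMeasure ?_) fun x => ?_
    · fun_prop
    · fun_prop
    dsimp only
    nlinarith [sq_nonneg (rot i j (rot k l f) x - polyFun (rotDer i j (rotDer k l p)) x)]
  have hI (k l i j : Fin n) : ∫ x, (2 * (rot i j (rot k l f) x *
      polyFun (rotDer i j (rotDer k l p)) x) - polyFun (rotDer i j (rotDer k l p)) x *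
      polyFun (rotDer i j (rotDer k l p)) x) ∂sphMeasure n =
      2 * ∫ x, rot i j (rot k l f) x * polyFun (rotDer i j (rotDer k l p)) x ∂sphMeasure n -
      ∫ x, polyFun (rotDer i j (rotDer k l p)) x *
        polyFun (rotDer i j (rotDer k l p)) x ∂sphMeasure n := by
    have hc1 : Continuous (rot i j (rot k l f)) :=
      continuous_rot (contDiff_rot hf (by norm_num) k l) i j
    have hc2 := continuous_polyFun (rotDer i j (rotDer k l p))
    rw [integral_sub (integrable_sphMeasure (by fun_prop)) (integrable_sphMeasure (by fun_prop)),
      integral_const_mul]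
  simp only [hI, Finset.sum_sub_distrib, ← Finset.mul_sum, h1, h2] at h3
  rw [hP]
  linarith

lemma sum_integral_rot_rot_sq {f : E n → ℝ} (hf : ContDiff ℝ 2 f) :
    ∑ k, ∑ l, ∑ i, ∑ j, ∫ x, rot i j (rot k l f) x ^ 2 ∂sphMeasure n =
      4 * ∫ x, hsNormSq (sHess f x) ∂sphMeasure n +
        4 * ((n : ℝ) - 2) * ∫ x, ‖sgrad f x‖ ^ 2 ∂sphMeasure n := by
  have hc (k l i j : Fin n) : Continuous (fun x => rot i j (rot k l f) x ^ 2) :=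
    (continuous_rot (contDiff_rot hf (by norm_num) k l) i j).pow 2
  have hc' (i j : Fin n) : Continuous (fun x => rot i j f x ^ 2) :=
    (continuous_rot (hf.of_le (by norm_num)) i j).pow 2
  have hS : Continuous fun x => ∑ k, ∑ l, ∑ i, ∑ j, rot i j (rot k l f) x ^ 2 := by fun_prop
  have hG : Continuous fun x => ∑ i, ∑ j, rot i j f x ^ 2 := by fun_prop
  have hSI : ∫ x, ∑ k, ∑ l, ∑ i, ∑ j, rot i j (rot k l f) x ^ 2 ∂sphMeasure n =
      ∑ k, ∑ l, ∑ i, ∑ j, ∫ x, rot i j (rot k l f) x ^ 2 ∂sphMeasure n := by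
    rw [integral_finsetSum _ fun k _ => integrable_sphMeasure (by fun_prop)]
    refine Finset.sum_congr rfl fun k _ => ?_
    rw [integral_finsetSum _ fun l _ => integrable_sphMeasure (by fun_prop)]
    refine Finset.sum_congr rfl fun l _ => ?_
    rw [integral_finsetSum _ fun i _ => integrable_sphMeasure (by fun_prop)]
    refine Finset.sum_congr rfl fun i _ => ?_
    rw [integral_finsetSum _ fun j _ => integrable_sphMeasure (hc k l i j)]
  have hGI : ∫ x, ∑ i, ∑ j, rot i j f x ^ 2 ∂sphMeasure n =
      2 * ∫ x, ‖sgrad f x‖ ^ 2 ∂sphMeasure n := by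
    rw [← integral_const_mul]
    exact integral_congr_sphere fun x hx => sum_rot_sq f hx
  have hH : ∫ x, 4 * hsNormSq (sHess f x) ∂sphMeasure n =
      ∫ x, (∑ k, ∑ l, ∑ i, ∑ j, rot i j (rot k l f) x ^ 2) -
        2 * ((n : ℝ) - 2) * (∑ i, ∑ j, rot i j f x ^ 2) ∂sphMeasure n := by
    refine integral_congr_sphere fun x hx => ?_
    have h1 := sum_rot_rot_sq_eq hf hx
    rw [sum_comm_pairs] at h1
    rw [sum_rot_sq f hx, h1]
    ring
  rw [integral_const_mul, integral_sub (integrable_sphMeasure hS)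
    ((integrable_sphMeasure hG).const_mul _), integral_const_mul, hSI, hGI] at hH
  linarith

/-- If the spectral gap seen by `f` is at least `μ`, then the energy of `f` is controlled by the
Hilbert–Schmidt norm of its spherical Hessian. -/
lemma mul_integral_sgrad_le {f : E n → ℝ} (hf : ContDiff ℝ 2 f) {μ : ℝ}
    (hc : ∀ N, (μ ≤ sphEigenvalue n (N + 1) ∧ 0 < sphEigenvalue n (N + 1)) ∨
      ∀ w ∈ polySpace n (N + 1), w ∈ (polySpace n N)ᗮ → ⟪toL2 f hf.continuous, w⟫ = 0) :
    (μ - ((n : ℝ) - 2)) * ∫ x, ‖sgrad f x‖ ^ 2 ∂sphMeasure n ≤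
      ∫ x, hsNormSq (sHess f x) ∂sphMeasure n := by
  set a := toL2 f hf.continuous with ha
  set b := toL2 (casimir f) (continuous_casimir hf) with hb
  have hS := sum_integral_rot_rot_sq hf
  have hN (N : ℕ) : μ * -⟪(polySpace n N).starProjection b, a⟫ ≤
      ∫ x, hsNormSq (sHess f x) ∂sphMeasure n +
        ((n : ℝ) - 2) * ∫ x, ‖sgrad f x‖ ^ 2 ∂sphMeasure n := by
    have h1 := mul_neg_inner_starProjection_le polySpace_mono (a := a) (b := b)
      (c := fun N => sphEigenvalue n (N + 1))
      (fun w hw => inner_casimir_of_mem_polySpace_zero hf hw)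
      (fun N w hw hwo => inner_casimir_of_mem_orthogonal hf hw hwo) hc N
    have h2 := norm_starProjection_casimir_sq_le hf N
    linarith
  have hlim : Tendsto (fun N => μ * -⟪(polySpace n N).starProjection b, a⟫) atTop
      (nhds (μ * -⟪b, a⟫)) :=
    (((tendsto_starProjection_toL2 (continuous_casimir hf)).inner tendsto_const_nhds).neg).const_mul
      μ
  have h := le_of_tendsto' hlim hN
  rw [ha, hb, inner_toL2, integral_casimir_mul_self hf, neg_neg] at h
  linarith

lemma integral_sgrad_le_of_contDiff (hn : 2 ≤ n) {f : E n → ℝ} (hf : ContDiff ℝ 2 f) :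
    ∫ x, ‖sgrad f x‖ ^ 2 ∂sphMeasure n ≤ ∫ x, hsNormSq (sHess f x) ∂sphMeasure n := by
  have hn' : (2 : ℝ) ≤ n := by exact_mod_cast hn
  have h := mul_integral_sgrad_le hf (μ := n - 1) fun N =>
    have := sphEigenvalue_succ_ge hn N
    Or.inl ⟨this, by linarith⟩
  linarith

lemma mul_integral_sgrad_le_of_orthogonal_linear (hn : 2 ≤ n) {f : E n → ℝ}
    (hf : ContDiff ℝ 2 f) (hlin : ∀ v : E n, ∫ θ, ⟪v, θ⟫ * f θ ∂sphMeasure n = 0) :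
    ((n : ℝ) + 2) * ∫ x, ‖sgrad f x‖ ^ 2 ∂sphMeasure n ≤
      ∫ x, hsNormSq (sHess f x) ∂sphMeasure n := by
  have hn' : (2 : ℝ) ≤ n := by exact_mod_cast hn
  have h := mul_integral_sgrad_le hf (μ := 2 * n) fun N => by
    cases N with
    | zero =>
      exact Or.inr fun w hw hwo => inner_eq_zero_of_orthogonal_linear hn hf.continuous hlin hw hwo
    | succ N =>
      have := sphEigenvalue_add_two_ge hn N
      exact Or.inl ⟨this, by linarith⟩
  linarith

/-! ### Reduction to globally smooth functions -/

open scoped Manifold ContDiff in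
lemma exists_contDiff_eventuallyEq_of_contDiffOn {f : E n → ℝ} {U K : Set (E n)} (hU : IsOpen U)
    (hK : IsClosed K) (hKU : K ⊆ U) (hf : ContDiffOn ℝ 2 f U) :
    ∃ g : E n → ℝ, ContDiff ℝ 2 g ∧ ∀ x ∈ K, g =ᶠ[nhds x] f := by
  obtain ⟨χ, h0, h1, -⟩ := exists_contMDiffMap_zero_one_nhds_of_isClosed (n := 2) 𝓘(ℝ, E n)
    hU.isClosed_compl hK (Set.disjoint_compl_left_iff_subset.2 hKU)
  have hχ : ContDiff ℝ 2 χ := χ.contMDiff.contDiff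
  refine ⟨fun x => χ x * f x, contDiff_iff_contDiffAt.2 fun x => ?_, fun x hx => ?_⟩
  · by_cases hx : x ∈ U
    · exact hχ.contDiffAt.mul (hf.contDiffAt (hU.mem_nhds hx))
    · refine (contDiffAt_const (c := (0 : ℝ))).congr_of_eventuallyEq ?_
      filter_upwards [eventually_nhdsSet_iff_forall.1 h0 x hx] with y hy
      simp [hy]
  · filter_upwards [eventually_nhdsSet_iff_forall.1 h1 x hx] with y hy
    simp [hy]

lemma gradient_congr {f g : E n → ℝ} {x : E n} (h : g =ᶠ[nhds x] f) :
    gradient g x = gradient f x := by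
  rw [gradient, gradient, h.fderiv_eq]

lemma sgrad_congr {f g : E n → ℝ} {x : E n} (h : g =ᶠ[nhds x] f) : sgrad g x = sgrad f x := by
  rw [sgrad, sgrad, gradient_congr h]

lemma sHess_congr {f g : E n → ℝ} {x : E n} (h : g =ᶠ[nhds x] f) : sHess g x = sHess f x := by
  have h' : gradient g =ᶠ[nhds x] gradient f :=
    h.eventuallyEq_nhds.mono fun y hy => gradient_congr hy
  rw [sHess, sHess, gradient_congr h, hess, hess, h'.fderiv_eq]

/-- **Proposition 5.1 (Statement 13).** Poincaré-type bounds for the spherical gradient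
in terms of the spherical Hessian. -/
theorem sgrad_int_le_sHess_int
    {n : ℕ} (hn : 2 ≤ n) (f : E n → ℝ) (U : Set (E n)) (hU : IsOpen U)
    (hUS : Metric.sphere (0 : E n) 1 ⊆ U) (hf : ContDiffOn ℝ 2 f U) :
    (∫ θ, ‖sgrad f θ‖ ^ 2 ∂sphMeasure n ≤ ∫ θ, hsNormSq (sHess f θ) ∂sphMeasure n) ∧
    ((∀ v : E n, ∫ θ, ⟪v, θ⟫ * f θ ∂sphMeasure n = 0) →
      ∫ θ, ‖sgrad f θ‖ ^ 2 ∂sphMeasure n ≤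
        (1 / ((n : ℝ) + 2)) * ∫ θ, hsNormSq (sHess f θ) ∂sphMeasure n) := by
  obtain ⟨g, hg, hgf⟩ := exists_contDiff_eventuallyEq_of_contDiffOn hU isClosed_sphere hUS hf
  have hmem {x : E n} (hx : ‖x‖ = 1) : x ∈ Metric.sphere (0 : E n) 1 := by simpa using hx
  have h1 : ∫ θ, ‖sgrad f θ‖ ^ 2 ∂sphMeasure n = ∫ θ, ‖sgrad g θ‖ ^ 2 ∂sphMeasure n :=
    integral_congr_sphere fun x hx => by rw [sgrad_congr (hgf x (hmem hx))]
  have h2 : ∫ θ, hsNormSq (sHess f θ) ∂sphMeasure n = ∫ θ, hsNormSq (sHess g θ) ∂sphMeasure n :=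
    integral_congr_sphere fun x hx => by rw [sHess_congr (hgf x (hmem hx))]
  rw [h1, h2]
  refine ⟨integral_sgrad_le_of_contDiff hn hg, fun hlin => ?_⟩
  have h3 := mul_integral_sgrad_le_of_orthogonal_linear hn hg fun v => by
    rw [← hlin v]
    exact integral_congr_sphere fun x hx => by rw [(hgf x (hmem hx)).eq_of_nhds]
  rw [one_div_mul_eq_div, le_div_iff₀ (by positivity), mul_comm]
  exact h3

end SecondOrderConc
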